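/- Let F be a field and let m, n, r be integers with 3 ≤ m and 0 ≤ r ≤ n. Let A_1, …, A_m ⊆ [n], set E = ∪_{i∈[m]} {i}×A_i ⊆ [m]×[n], and let S_3 = {j ∈ [n] : j belongs to exactly three of the sets A_1,…,A_m}. Assume that no element of [n] belongs to more than three of the sets A_i and that |S_3| ≤ r. Then E is independent in the tensor matroid T_{m,n}(3,r,F) if and only if E ∖ ([m]×S_3) is independent in the tensor matroid T_{m,n}(3, r−|S_3|, F). -/

import Mathlib

open scoped Classical

noncomputable section

/-- The field of fractions of the polynomial ring over `F` in variables
`X i k` (`i ∈ [m]`, `k ∈ [s]`) and `Y j l` (`j ∈ [n]`, `l ∈ [r]`). -/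
abbrev TField (F : Type*) [Field F] (m n s r : ℕ) :=
  FractionRing (MvPolynomial ((Fin m × Fin s) ⊕ (Fin n × Fin r)) F)

/-- The vector `u_i ⊗ v_j ∈ K_F^{[s]×[r]}` with `(k,l)`-entry `X_{ik} · Y_{jl}`. -/
noncomputable def tvec (F : Type*) [Field F] (m n s r : ℕ) (e : Fin m × Fin n) :
    Fin s × Fin r → TField F m n s r := fun kl =>
  algebraMap (MvPolynomial ((Fin m × Fin s) ⊕ (Fin n × Fin r)) F) (TField F m n s r)
      (MvPolynomial.X (Sum.inl (e.1, kl.1))) *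
  algebraMap (MvPolynomial ((Fin m × Fin s) ⊕ (Fin n × Fin r)) F) (TField F m n s r)
      (MvPolynomial.X (Sum.inr (e.2, kl.2)))

/-- `E` is independent in the tensor matroid `T_{m,n}(s,r,F)`: the family
`{u_i ⊗ v_j : (i,j) ∈ E}` is linearly independent over `K_F`. -/
def TensorIndep (F : Type*) [Field F] (m n s r : ℕ) (E : Set (Fin m × Fin n)) : Prop :=
  LinearIndependent (TField F m n s r) (fun e : E => tvec F m n s r e)

/-- `E` is spanning in the tensor matroid `T_{m,n}(s,r,F)`: the family
`{u_i ⊗ v_j : (i,j) ∈ E}` spans `K_F^{[s]×[r]}`. -/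
def TensorSpanning (F : Type*) [Field F] (m n s r : ℕ) (E : Set (Fin m × Fin n)) : Prop :=
  Submodule.span (TField F m n s r) (tvec F m n s r '' E) = ⊤

/-- `Smult A k` is the set of `j ∈ [n]` which appear in exactly `k` of the sets `A i`. -/
def Smult {m n : ℕ} (A : Fin m → Finset (Fin n)) (k : ℕ) : Finset (Fin n) :=
  Finset.univ.filter (fun j => (Finset.univ.filter (fun i => j ∈ A i)).card = k)

/-!
Fix `S ⊆ [n]` such that every column `j ∈ S` has exactly `s` elements in `E`. For `j ∈ S` the
vectors `u_i` with `(i, j) ∈ E` form a basis of `U = K_F^s`, so the `u_i ⊗ v_j` with `(i, j) ∈ E`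
and `j ∈ S` form a basis of `U ⊗ span (v_j : j ∈ S)`, which is the kernel of `U ⊗ V → U ⊗ V'` for
any `f : V → V'` with kernel `span (v_j : j ∈ S)`. Hence contracting `E ∩ ([m] × S)` amounts to
replacing `v` by `f ∘ v` on the remaining columns, in a space `V'` of dimension `r - |S|`.

The vectors `f ∘ v` need not be generic any more, but independence for any choice of vectors
over an extension of `F` implies independence for generic ones, because a minor with a nonzero
specialization is nonzero. Starting from generic `v` and projecting gives one implication; lifting
generic vectors of `V'` to `V`, with the columns in `S` sent to a basis of `ker f`, gives the other.
-/

open Matrix Module TensorProduct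

section Determinants

variable {ι κ K L R : Type*}

lemma linearIndependent_row_of_det_submatrix_ne_zero [Fintype ι] [CommRing R] [IsDomain R]
    {M : Matrix ι κ R} {f : ι → κ} (h : (M.submatrix id f).det ≠ 0) : LinearIndependent R M.row :=
  (linearIndependent_rows_of_det_ne_zero h).of_comp (LinearMap.funLeft R R f)

lemma exists_det_submatrix_ne_zero [Fintype ι] [Field K] [Finite κ] {M : Matrix ι κ K}
    (h : LinearIndependent K M.row) : ∃ f : ι → κ, (M.submatrix id f).det ≠ 0 := by
  have := Fintype.ofFinite κ
  have hrank : finrank K (Submodule.span K (Set.range M.col)) = Fintype.card ι := by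
    rw [← rank_eq_finrank_span_cols, h.rank_matrix]
  obtain ⟨g, hg, -, hindep⟩ := Submodule.exists_fun_fin_finrank_span_eq K (Set.range M.col)
  choose f hf using hg
  let e : ι ≃ Fin (finrank K (Submodule.span K (Set.range M.col))) :=
    Fintype.equivFinOfCardEq hrank.symm
  refine ⟨f ∘ e, IsUnit.ne_zero ?_⟩
  rw [← isUnit_iff_isUnit_det, ← linearIndependent_cols_iff_isUnit]
  have hcol : (M.submatrix id (f ∘ e)).col = g ∘ e := funext fun i => hf (e i)
  exact hcol ▸ hindep.comp e e.injective

lemma linearIndependent_row_of_specialization [Finite ι] [Finite κ] [CommRing R] [Field K] [Field L]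
    (φ : R →+* L) {ψ : R →+* K} (hψ : Function.Injective ψ) (M : Matrix ι κ R)
    (h : LinearIndependent L (M.map φ).row) : LinearIndependent K (M.map ψ).row := by
  have := Fintype.ofFinite ι
  obtain ⟨f, hf⟩ := exists_det_submatrix_ne_zero h
  refine linearIndependent_row_of_det_submatrix_ne_zero (f := f) ?_
  rw [submatrix_map, ← RingHom.mapMatrix_apply, ← RingHom.map_det] at hf ⊢
  exact (map_ne_zero_iff ψ hψ).2 (ne_zero_of_map hf)

lemma linearIndependent_row_X [Fintype ι] [Fintype κ] [CommRing R] [Field K] {σ : Type*}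
    (hcard : Fintype.card ι ≤ Fintype.card κ) {e : ι → κ → σ} (he : Function.Injective2 e)
    {ψ : MvPolynomial σ R →+* K} (hψ : Function.Injective ψ) :
    LinearIndependent K fun i k => ψ (MvPolynomial.X (e i k)) := by
  have : Nontrivial R := (ψ.comp MvPolynomial.C).domain_nontrivial
  obtain ⟨f⟩ := Function.Embedding.nonempty_of_card_le hcard
  let τ : MvPolynomial (ι × ι) R →+* K :=
    ψ.comp (MvPolynomial.rename fun p => e p.1 (f p.2)).toRingHom
  have hτ : Function.Injective τ := hψ.comp <| MvPolynomial.rename_injective _ fun p q h => by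
    obtain ⟨h₁, h₂⟩ := he h
    exact Prod.ext h₁ (f.injective h₂)
  refine linearIndependent_row_of_det_submatrix_ne_zero
    (M := .of fun i k => ψ (MvPolynomial.X (e i k))) (f := f) ?_
  convert (map_ne_zero_iff τ hτ).2 (det_mvPolynomialX_ne_zero ι R)
  rw [RingHom.map_det]
  congr 1
  ext i k
  simp [τ]

end Determinants

section TensorFamilies

variable {ι κ K U V V' : Type*} [Field K] [AddCommGroup U] [Module K U] [AddCommGroup V]
  [Module K V] [AddCommGroup V'] [Module K V']

lemma linearIndepOn_union_iff_of_ker_eq_span {v : ι → V} {s t : Set ι} (hst : Disjoint s t)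
    {f : V →ₗ[K] V'} (hf : f.ker = Submodule.span K (v '' s)) :
    LinearIndepOn K v (s ∪ t) ↔ LinearIndepOn K v s ∧ LinearIndepOn K (f ∘ v) t := by
  rw [linearIndepOn_union_iff_quotient hst, ← hf]
  exact and_congr_right fun _ =>
    (LinearMap.linearIndependent_iff (f.ker.liftQ f le_rfl)
      (f.ker.ker_liftQ_eq_bot _ _ le_rfl)).symm

lemma linearIndependent_sigma_tmul {φ : κ → Type*} {u : ∀ j, φ j → U}
    (hu : ∀ j, LinearIndependent K (u j)) {v : κ → V} (hv : LinearIndependent K v) :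
    LinearIndependent K fun p : Σ j, φ j => u p.1 p.2 ⊗ₜ[K] v p.1 := by
  let T : (κ →₀ U) →ₗ[K] U ⊗[K] V :=
    (Finsupp.linearCombination K v).lTensor U ∘ₗ (finsuppScalarRight K K U κ).symm.toLinearMap
  have hT : Function.Injective T :=
    (Flat.lTensor_preserves_injective_linearMap _ hv).comp (LinearEquiv.injective _)
  simpa [T, Function.comp_def] using
    (Finsupp.linearIndependent_single u hu).map' T (LinearMap.ker_eq_bot.2 hT)

lemma linearIndepOn_tmul_of_fibers {u : ι → U} {v : κ → V} {E : Set (ι × κ)} {S : Set κ}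
    (hu : ∀ j ∈ S, LinearIndepOn K u {i | (i, j) ∈ E}) (hv : LinearIndepOn K v S) :
    LinearIndepOn K (fun p => u p.1 ⊗ₜ[K] v p.2) {p ∈ E | p.2 ∈ S} := by
  let e : {p ∈ E | p.2 ∈ S} → Σ j : S, {i | (i, j.1) ∈ E} :=
    fun p => ⟨⟨p.1.2, p.2.2⟩, ⟨p.1.1, p.2.1⟩⟩
  have he : Function.LeftInverse (fun q => ⟨(q.2.1, q.1.1), q.2.2, q.1.2⟩) e := fun _ => rfl
  exact (linearIndependent_sigma_tmul (fun j : S => hu j j.2) hv).comp e he.injective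

lemma ker_lTensor_eq_span_tmul {u : ι → U} {v : κ → V} {E : Set (ι × κ)} {S : Set κ}
    (hu : ∀ j ∈ S, Submodule.span K (u '' {i | (i, j) ∈ E}) = ⊤)
    {f : V →ₗ[K] V'} (hf : f.ker = Submodule.span K (v '' S)) :
    (f.lTensor U).ker =
      Submodule.span K ((fun p => u p.1 ⊗ₜ[K] v p.2) '' {p ∈ E | p.2 ∈ S}) := by
  apply le_antisymm
  · have hker : (f.lTensor U).ker = Submodule.map₂ (mk K U V) ⊤ f.ker := by
      rw [(Flat.lTensor_exact U f.exact_subtype_ker_map).linearMap_ker_eq, LinearMap.lTensor,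
        range_map, LinearMap.range_id, Submodule.range_subtype]
    rw [hker, hf, Submodule.map₂_le]
    intro x hx y hy
    suffices v '' S ⊆ Submodule.comap (mk K U V x) (Submodule.span K _) from
      Submodule.span_le.2 this hy
    rintro _ ⟨j, hj, rfl⟩
    rw [← hu j hj] at hx
    suffices u '' {i | (i, j) ∈ E} ⊆ Submodule.comap ((mk K U V).flip (v j)) _ from
      Submodule.span_le.2 this hx
    rintro _ ⟨i, hi, rfl⟩
    exact Submodule.subset_span ⟨(i, j), ⟨hi, hj⟩, rfl⟩
  · rw [Submodule.span_le]
    rintro _ ⟨p, hp, rfl⟩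
    have : f (v p.2) = 0 := by
      rw [← LinearMap.mem_ker, hf]
      exact Submodule.subset_span (Set.mem_image_of_mem v hp.2)
    simp [this]

lemma linearIndepOn_tmul_iff_of_ker_eq_span {u : ι → U} {v : κ → V} {E : Set (ι × κ)} {S : Set κ}
    (hu : ∀ j ∈ S, LinearIndepOn K u {i | (i, j) ∈ E})
    (hu' : ∀ j ∈ S, Submodule.span K (u '' {i | (i, j) ∈ E}) = ⊤)
    (hv : LinearIndepOn K v S) {f : V →ₗ[K] V'} (hf : f.ker = Submodule.span K (v '' S)) :
    LinearIndepOn K (fun p => u p.1 ⊗ₜ[K] v p.2) E ↔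
      LinearIndepOn K (fun p => u p.1 ⊗ₜ[K] f (v p.2)) {p ∈ E | p.2 ∉ S} := by
  have hE : {p ∈ E | p.2 ∈ S} ∪ {p ∈ E | p.2 ∉ S} = E := Set.inter_union_compl E {p | p.2 ∈ S}
  have hdisj : Disjoint {p ∈ E | p.2 ∈ S} {p ∈ E | p.2 ∉ S} :=
    Set.disjoint_left.2 fun _ h h' => h'.2 h.2
  conv_lhs => rw [← hE, linearIndepOn_union_iff_of_ker_eq_span hdisj
    (ker_lTensor_eq_span_tmul hu' hf)]
  exact and_iff_right (linearIndepOn_tmul_of_fibers hu hv)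

lemma exists_linearMap_ker_eq_span [FiniteDimensional K V] [FiniteDimensional K V'] {v : κ → V}
    {S : Set κ} (hv : LinearIndepOn K v S) (hd : finrank K V = finrank K V' + S.ncard) :
    ∃ f : V →ₗ[K] V', f.ker = Submodule.span K (v '' S) := by
  have : Finite S := hv.finite
  have := Fintype.ofFinite S
  have hspan : finrank K (Submodule.span K (v '' S)) = S.ncard := by
    rw [Set.image_eq_range, finrank_span_eq_card hv, ← Nat.card_coe_set_eq,
      Nat.card_eq_fintype_card]
  have hquot : finrank K (V ⧸ Submodule.span K (v '' S)) = finrank K V' := by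
    rw [Submodule.finrank_quotient, hd, hspan, Nat.add_sub_cancel]
  let e := LinearEquiv.ofFinrankEq _ _ hquot
  exact ⟨e.toLinearMap ∘ₗ Submodule.mkQ _, by rw [LinearEquiv.ker_comp, Submodule.ker_mkQ]⟩

lemma exists_lift_ker_eq_span [FiniteDimensional K V] [FiniteDimensional K V'] {S : Set κ}
    [Finite S] (v' : κ → V') (hd : finrank K V = finrank K V' + S.ncard) :
    ∃ (v : κ → V) (f : V →ₗ[K] V'), LinearIndepOn K v S ∧
      f.ker = Submodule.span K (v '' S) ∧ ∀ j ∉ S, f (v j) = v' j := by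
  have := Fintype.ofFinite S
  let b := Pi.basisFun K S
  let e : V ≃ₗ[K] V' × (S → K) := .ofFinrankEq _ _ <| by
    rw [hd, finrank_prod, finrank_fintype_fun_eq_card, ← Nat.card_coe_set_eq,
      Nat.card_eq_fintype_card]
  let w (j : κ) : V' × (S → K) := if h : j ∈ S then (0, b ⟨j, h⟩) else (v' j, 0)
  have hw : S.domRestrict w = LinearMap.inr K V' (S → K) ∘ b := by
    ext1 j
    simp [w]
  have hw_indep : LinearIndependent K (S.domRestrict w) :=
    hw ▸ b.linearIndependent.map' _ (LinearMap.ker_eq_bot.2 LinearMap.inr_injective)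
  have hw_span : Submodule.span K (w '' S) = (LinearMap.fst K V' (S → K)).ker := by
    rw [LinearMap.ker_fst, ← Set.range_domRestrict, hw, Set.range_comp, ← Submodule.map_span,
      b.span_eq, Submodule.map_top]
  refine ⟨e.symm ∘ w, LinearMap.fst K V' (S → K) ∘ₗ e.toLinearMap, ?_, ?_, ?_⟩
  · exact hw_indep.map' _ e.symm.ker
  · rw [Set.image_comp, LinearMap.ker_comp, ← hw_span, Submodule.comap_equiv_eq_map_symm]
    exact Submodule.span_image e.symm.toLinearMap |>.symm
  · intro j hj
    simp [w, hj]

lemma linearIndepOn_tmul_pi_iff {σ ρ : Type*} [Finite σ] [Finite ρ] {u : ι → σ → K}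
    {v : κ → ρ → K} {E : Set (ι × κ)} :
    LinearIndepOn K (fun p => u p.1 ⊗ₜ[K] v p.2) E ↔
      LinearIndepOn K (fun p (kl : σ × ρ) => u p.1 kl.1 * v p.2 kl.2) E := by
  let e := ((Pi.basisFun K σ).tensorProduct (Pi.basisFun K ρ)).equivFun
  have he : (fun (p : ι × κ) (kl : σ × ρ) => u p.1 kl.1 * v p.2 kl.2) =
      e ∘ fun p => u p.1 ⊗ₜ[K] v p.2 := by
    ext p ⟨k, l⟩
    simp [e, Basis.equivFun_apply, mul_comm]
  rw [he]
  exact (LinearMap.linearIndependent_iff e.toLinearMap e.ker).symm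

end TensorFamilies

section GenericVectors

variable (F : Type*) [Field F] (m n s r : ℕ)

/-- The totally generic vectors `u_1, …, u_m ∈ K_F^s`, with `k`-th entry of `u_i` equal to
`X_{ik}`. -/
def genericLeft (i : Fin m) (k : Fin s) : TField F m n s r :=
  algebraMap (MvPolynomial ((Fin m × Fin s) ⊕ (Fin n × Fin r)) F) _ (.X (.inl (i, k)))

/-- The totally generic vectors `v_1, …, v_n ∈ K_F^r`, with `l`-th entry of `v_j` equal to
`Y_{jl}`. -/
def genericRight (j : Fin n) (l : Fin r) : TField F m n s r :=
  algebraMap (MvPolynomial ((Fin m × Fin s) ⊕ (Fin n × Fin r)) F) _ (.X (.inr (j, l)))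

variable {m n s r}

lemma linearIndepOn_genericLeft {I : Set (Fin m)} (hI : I.ncard ≤ s) :
    LinearIndepOn (TField F m n s r) (genericLeft F m n s r) I := by
  have he : Function.Injective2 fun (i : I) (k : Fin s) =>
      (.inl (i.1, k) : (Fin m × Fin s) ⊕ (Fin n × Fin r)) :=
    fun _ _ _ _ h => by simpa [Subtype.ext_iff] using h
  have hcard : Fintype.card I ≤ Fintype.card (Fin s) := by
    rwa [Fintype.card_fin, ← Set.toFinset_card, ← Set.ncard_eq_toFinset_card']
  exact linearIndependent_row_X hcard he (IsFractionRing.injective (MvPolynomial _ F) _)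

lemma linearIndepOn_genericRight {J : Set (Fin n)} (hJ : J.ncard ≤ r) :
    LinearIndepOn (TField F m n s r) (genericRight F m n s r) J := by
  have he : Function.Injective2 fun (j : J) (l : Fin r) =>
      (.inr (j.1, l) : (Fin m × Fin s) ⊕ (Fin n × Fin r)) :=
    fun _ _ _ _ h => by simpa [Subtype.ext_iff] using h
  have hcard : Fintype.card J ≤ Fintype.card (Fin r) := by
    rwa [Fintype.card_fin, ← Set.toFinset_card, ← Set.ncard_eq_toFinset_card']
  exact linearIndependent_row_X hcard he (IsFractionRing.injective (MvPolynomial _ F) _)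

lemma span_image_genericLeft {I : Set (Fin m)} (hI : I.ncard = s) :
    Submodule.span (TField F m n s r) (genericLeft F m n s r '' I) = ⊤ := by
  rw [Set.image_eq_range]
  exact (linearIndepOn_genericLeft F hI.le).span_eq_top_of_card_eq_finrank'
    (by rwa [finrank_fin_fun, ← Set.toFinset_card, ← Set.ncard_eq_toFinset_card'])

variable {F}

lemma linearIndepOn_genericLeft_tmul_iff {V V' : Type*} [AddCommGroup V]
    [Module (TField F m n s r) V] [AddCommGroup V'] [Module (TField F m n s r) V']
    {E : Set (Fin m × Fin n)} {S : Set (Fin n)} (hE : ∀ j ∈ S, {i | (i, j) ∈ E}.ncard = s)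
    {v : Fin n → V} (hv : LinearIndepOn (TField F m n s r) v S) {f : V →ₗ[TField F m n s r] V'}
    (hf : f.ker = Submodule.span (TField F m n s r) (v '' S)) :
    LinearIndepOn (TField F m n s r)
        (fun p => genericLeft F m n s r p.1 ⊗ₜ[TField F m n s r] v p.2) E ↔
      LinearIndepOn (TField F m n s r)
        (fun p => genericLeft F m n s r p.1 ⊗ₜ[TField F m n s r] f (v p.2)) {p ∈ E | p.2 ∉ S} :=
  linearIndepOn_tmul_iff_of_ker_eq_span (fun j hj => linearIndepOn_genericLeft F (hE j hj).le)
    (fun j hj => span_image_genericLeft F (hE j hj)) hv hf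

lemma tensorIndep_iff_linearIndepOn_tmul {E : Set (Fin m × Fin n)} :
    TensorIndep F m n s r E ↔ LinearIndepOn (TField F m n s r)
      (fun p => genericLeft F m n s r p.1 ⊗ₜ[TField F m n s r] genericRight F m n s r p.2) E :=
  by
  rw [linearIndepOn_tmul_pi_iff]
  rfl

lemma tensorIndep_of_linearIndepOn_tmul {L : Type*} [Field L] [Algebra F L] {u : Fin m → Fin s → L}
    {v : Fin n → Fin r → L} {E : Set (Fin m × Fin n)}
    (h : LinearIndepOn L (fun p => u p.1 ⊗ₜ[L] v p.2) E) : TensorIndep F m n s r E := by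
  let M : Matrix E (Fin s × Fin r) (MvPolynomial ((Fin m × Fin s) ⊕ (Fin n × Fin r)) F) :=
    .of fun p kl => .X (.inl (p.1.1, kl.1)) * .X (.inr (p.1.2, kl.2))
  let φ : MvPolynomial ((Fin m × Fin s) ⊕ (Fin n × Fin r)) F →ₐ[F] L :=
    MvPolynomial.aeval (Sum.elim (fun a => u a.1 a.2) fun a => v a.1 a.2)
  have hφ : (M.map φ.toRingHom).row = fun p kl => u p.1.1 kl.1 * v p.1.2 kl.2 := by
    ext p kl
    simp [M, φ]
  have hM : (M.map (algebraMap _ (TField F m n s r))).row = fun p : E => tvec F m n s r p := by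
    ext p kl
    simp [M, tvec]
  rw [TensorIndep, ← hM]
  refine linearIndependent_row_of_specialization φ.toRingHom (IsFractionRing.injective _ _) M ?_
  exact hφ ▸ linearIndepOn_tmul_pi_iff.1 h

end GenericVectors

theorem quotient_S3_general (F : Type*) [Field F] (m n s r : ℕ) (E : Set (Fin m × Fin n))
    (S : Finset (Fin n)) (hE : ∀ j ∈ S, {i | (i, j) ∈ E}.ncard = s) (hS : S.card ≤ r) :
    TensorIndep F m n s r E ↔ TensorIndep F m n s (r - S.card) {p ∈ E | p.2 ∉ S} := by
  have hd (K : Type _) [Field K] : finrank K (Fin r → K) =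
      finrank K (Fin (r - S.card) → K) + (S : Set (Fin n)).ncard := by
    rw [finrank_fin_fun, finrank_fin_fun, Set.ncard_coe_finset, Nat.sub_add_cancel hS]
  constructor <;> intro h <;> rw [tensorIndep_iff_linearIndepOn_tmul] at h
  · have hv : LinearIndepOn (TField F m n s r) (genericRight F m n s r) S :=
      linearIndepOn_genericRight F (by rwa [Set.ncard_coe_finset])
    obtain ⟨f, hker⟩ := exists_linearMap_ker_eq_span
      (V' := Fin (r - S.card) → TField F m n s r) hv (hd (TField F m n s r))
    have h' := (linearIndepOn_genericLeft_tmul_iff hE hv hker).1 h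
    exact tensorIndep_of_linearIndepOn_tmul (u := genericLeft F m n s r)
      (v := fun j => f (genericRight F m n s r j)) h'
  · obtain ⟨v, f, hv, hker, hlift⟩ :=
      exists_lift_ker_eq_span (V := Fin r → TField F m n s (r - S.card))
        (genericRight F m n s (r - S.card)) (hd (TField F m n s (r - S.card)))
    have h' := (linearIndepOn_genericLeft_tmul_iff hE hv hker).2 <|
      h.congr fun p hp => by simp only [hlift p.2 hp.2]
    exact tensorIndep_of_linearIndepOn_tmul h'

theorem quotient_S3 (F : Type*) [Field F] (m n r : ℕ) (hm : 3 ≤ m) (hr : r ≤ n)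
    (A : Fin m → Finset (Fin n))
    (hmult : ∀ j : Fin n, (Finset.univ.filter (fun i => j ∈ A i)).card ≤ 3)
    (hS3 : (Smult A 3).card ≤ r) :
    TensorIndep F m n 3 r {p : Fin m × Fin n | p.2 ∈ A p.1} ↔
      TensorIndep F m n 3 (r - (Smult A 3).card)
        {p : Fin m × Fin n | p.2 ∈ A p.1 ∧ p.2 ∉ Smult A 3} :=
  quotient_S3_general F m n 3 r _ _
    (fun _ hj => by simpa [Smult, Set.ncard_eq_toFinset_card'] using hj) hS3
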